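/- arXiv:math/0402150 — 3 statements merged into one kernel-verified Lean document; each statement's English description precedes it below -/
import Mathlib

section
/- Stone–Weierstrass theorem for Tychonoff spaces: let X be a completely regular Hausdorff topological space and let S be a star-subalgebra of C(X, ℂ) (so S contains the constant functions) that separates the points of X. Then S is dense in C(X, ℂ) with respect to the compact-open topology; equivalently, the topological closure of S is all of C(X, ℂ). -/
/-!
A basic neighbourhood of `f` in the compact-open topology is governed by a single compact set
`K ⊆ X` and a radius `ε`. The restrictions to `K` of the elements of `S` form a star-subalgebra
of `C(K, ℂ)` that still separates points, so the Stone–Weierstrass theorem for compact spaces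
(`ContinuousMap.starSubalgebra_topologicalClosure_eq_top_of_separatesPoints`) provides an element
of `S` whose restriction is uniformly `ε`-close to `f` on `K`.
-/

/-- Stone–Weierstrass for Tychonoff spaces: a star-subalgebra of
`C(X, ℂ)` that separates points of a completely regular Hausdorff space `X` is dense
in `C(X, ℂ)` with the compact-open topology. -/
theorem starSubalgebra_dense_of_separatesPoints (X : Type*) [TopologicalSpace X]
    [T2Space X] [CompletelyRegularSpace X]
    (S : StarSubalgebra ℂ C(X, ℂ))
    (hsep : ∀ x y : X, x ≠ y → ∃ f ∈ S, f x ≠ f y) :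
    Dense (S : Set C(X, ℂ)) := by
  intro f
  rw [mem_closure_iff_nhds_basis (nhds_basis_uniformity'
    Metric.uniformity_basis_dist.compactConvergenceUniformity)]
  rintro ⟨K, ε⟩ ⟨hK, hε⟩
  have : CompactSpace K := isCompact_iff_compactSpace.mp hK
  let r : C(K, X) := ⟨Subtype.val, continuous_subtype_val⟩
  let A : StarSubalgebra ℂ C(K, ℂ) := S.map (r.compStarAlgHom' ℂ ℂ)
  have hA : A.SeparatesPoints := by
    intro x y hxy
    obtain ⟨g, hg, hne⟩ := hsep x y (Subtype.coe_injective.ne hxy)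
    exact ⟨_, ⟨_, ⟨g, hg, rfl⟩, rfl⟩, hne⟩
  have hmem : f.comp r ∈ closure (A : Set C(K, ℂ)) := by
    rw [← StarSubalgebra.topologicalClosure_coe,
      ContinuousMap.starSubalgebra_topologicalClosure_eq_top_of_separatesPoints A hA]
    trivial
  obtain ⟨_, ⟨g, hg, rfl⟩, hfg⟩ := Metric.mem_closure_iff.mp hmem ε hε
  exact ⟨g, hg, fun x hx => (ContinuousMap.dist_apply_le_dist (⟨x, hx⟩ : K)).trans_lt hfg⟩
end

section
/- The spectrum of the algebra of continuous functions recovers the space: let X be a completely regular Hausdorff (Tychonoff) topological space. The evaluation map sending x ∈ X to the functional f ↦ f(x) on C(X, ℂ) takes values in the star Gel'fand spectrum Δ*_{C(X,ℂ)} (it is a compact-open continuous unital star-algebra homomorphism to ℂ), and this map X → Δ*_{C(X,ℂ)} is a bijection. -/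
/-!
A continuous character `φ` of `C(X, ℂ)` is supported on a compact set: some neighbourhood of `0`
on which `‖φ‖ < 1` is given by a condition on a compact `K`, and scaling shows that `φ` kills
every function vanishing on `K`. If `φ` were evaluation at no point of `K`, each point of `K` would
have a function `g ∈ ker φ` with `g ≠ 0` near it; by compactness, finitely many of the functions
`star g * g` add up to some `h ∈ ker φ` that is strictly positive on `K`, say `h ≥ δ > 0` there.
Then `1 - h / max h δ` vanishes on `K`, so that `1 = φ h * φ (1 / max h δ) = 0`, a contradiction.
Injectivity is separation of points by continuous functions on a Tychonoff space.
-/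

/-- The star Gel'fand spectrum of the topological ℂ-*-algebra `C(X, ℂ)` (with the
compact-open topology): the compact-open continuous unital ℂ-star-algebra
homomorphisms `C(X, ℂ) → ℂ`, as a subset of `WeakDual ℂ C(X, ℂ)`. -/
def starGelfandSpectrumC (X : Type*) [TopologicalSpace X] : Set (WeakDual ℂ C(X, ℂ)) :=
  {φ | φ 1 = 1 ∧ (∀ f g : C(X, ℂ), φ (f * g) = φ f * φ g) ∧
    ∀ f : C(X, ℂ), φ (star f) = starRingEnd ℂ (φ f)}

/-- A continuous functional on `C(X, ℂ)` is supported on a compact set. -/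
lemma exists_compact_support {X : Type*} [TopologicalSpace X] (φ : C(X, ℂ) →L[ℂ] ℂ) :
    ∃ K : Set X, IsCompact K ∧ ∀ f : C(X, ℂ), (∀ x ∈ K, f x = 0) → φ f = 0 := by
  have hU : {f : C(X, ℂ) | ‖φ f‖ < 1} ∈ nhds (0 : C(X, ℂ)) :=
    (isOpen_lt φ.continuous.norm continuous_const).mem_nhds (by simp)
  obtain ⟨W, hW, hWU⟩ := UniformSpace.mem_nhds_iff.1 hU
  obtain ⟨K, V, hK, hV, hKV⟩ := (ContinuousMap.mem_compactConvergence_entourage_iff W).1 hW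
  refine ⟨K, hK, fun f hf => ?_⟩
  by_contra hne
  -- The multiple of `f` on which `φ` takes the value `1` lies in the neighbourhood of `0`.
  have hmem : ((φ f)⁻¹ • f) ∈ {f : C(X, ℂ) | ‖φ f‖ < 1} := by
    apply hWU
    apply hKV
    intro x hx
    have hfx : ((φ f)⁻¹ • f) x = 0 := by simp [hf x hx]
    simpa [hfx] using refl_mem_uniformity hV
  simp [hne] at hmem

/-- A real-valued continuous function, viewed as a complex-valued one. -/
def complexify {X : Type*} [TopologicalSpace X] (h : C(X, ℝ)) : C(X, ℂ) :=
  ⟨fun x => (h x : ℂ), by fun_prop⟩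

/-- A unital multiplicative functional that is evaluation at no point of a compact set `K` kills
some nonnegative function that is positive on `K`. -/
lemma exists_pos_in_kernel {X : Type*} [TopologicalSpace X] (φ : C(X, ℂ) →L[ℂ] ℂ)
    (h1 : φ 1 = 1) (hmul : ∀ f g : C(X, ℂ), φ (f * g) = φ f * φ g) {K : Set X}
    (hK : IsCompact K) (hne : ∀ x ∈ K, ∃ f : C(X, ℂ), φ f ≠ f x) :
    ∃ h : C(X, ℝ), (∀ x, 0 ≤ h x) ∧ φ (complexify h) = 0 ∧ ∀ x ∈ K, 0 < h x := by
  -- The claim is inherited by subsets and binary unions, so it is enough to prove it locally.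
  refine hK.induction_on (p := fun s => ∃ h : C(X, ℝ), (∀ x, 0 ≤ h x) ∧
    φ (complexify h) = 0 ∧ ∀ x ∈ s, 0 < h x) ?_ ?_ ?_ ?_
  · refine ⟨0, by simp, ?_, by simp⟩
    have h0 : complexify (0 : C(X, ℝ)) = 0 := by ext; simp [complexify]
    rw [h0, map_zero]
  · rintro s t hst ⟨h, hn, hφ, hp⟩
    exact ⟨h, hn, hφ, fun x hx => hp x (hst hx)⟩
  · rintro s t ⟨h, hn, hφ, hp⟩ ⟨k, kn, kφ, kp⟩
    refine ⟨h + k, fun x => add_nonneg (hn x) (kn x), ?_, ?_⟩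
    · have hadd : complexify (h + k) = complexify h + complexify k := by
        ext; simp [complexify]
      rw [hadd, map_add, hφ, kφ, add_zero]
    · rintro x (hx | hx)
      · exact add_pos_of_pos_of_nonneg (hp x hx) (kn x)
      · exact add_pos_of_nonneg_of_pos (hn x) (kp x hx)
  · intro x hx
    obtain ⟨f, hf⟩ := hne x hx
    let g : C(X, ℂ) := f - φ f • 1
    have hg : φ g = 0 := by simp [g, h1]
    have hgx : g x ≠ 0 := by simpa [g, sub_eq_zero] using hf.symm
    refine ⟨{y | g y ≠ 0}, mem_nhdsWithin_of_mem_nhds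
      ((isOpen_ne_fun g.continuous continuous_const).mem_nhds hgx),
      ⟨fun y => ‖g y‖ ^ 2, by fun_prop⟩, fun y => sq_nonneg _, ?_, fun y hy => ?_⟩
    · have hsq : complexify ⟨fun y => ‖g y‖ ^ 2, by fun_prop⟩ = star g * g := by
        ext y
        simp [complexify, Complex.conj_mul']
      rw [hsq, hmul, hg, mul_zero]
    · exact pow_pos (norm_pos_iff.2 hy) 2

/-- Every continuous character of `C(X, ℂ)` is evaluation at a point. -/
lemma exists_eq_eval {X : Type*} [TopologicalSpace X] (φ : C(X, ℂ) →L[ℂ] ℂ)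
    (h1 : φ 1 = 1) (hmul : ∀ f g : C(X, ℂ), φ (f * g) = φ f * φ g) :
    ∃ x : X, ∀ f : C(X, ℂ), φ f = f x := by
  obtain ⟨K, hK, hsupp⟩ := exists_compact_support φ
  by_contra! hne
  obtain ⟨h, -, hφ, hpos⟩ := exists_pos_in_kernel φ h1 hmul hK fun x _ => hne x
  obtain ⟨δ, hδ, hle⟩ := hK.exists_forall_le' h.continuous.continuousOn hpos
  have hmax : ∀ x, max (h x) δ ≠ 0 := fun x => (lt_max_of_lt_right hδ).ne'
  let u : C(X, ℝ) := ⟨fun x => (max (h x) δ)⁻¹, by fun_prop (disch := exact hmax _)⟩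
  have hz : φ (1 - complexify h * complexify u) = 0 := by
    apply hsupp
    intro x hx
    have hx0 : (h x : ℂ) ≠ 0 := by exact_mod_cast (hpos x hx).ne'
    simp [complexify, u, max_eq_left (hle x hx), hx0]
  rw [map_sub, h1, hmul, hφ] at hz
  simp at hz

/-- For a Tychonoff space `X`, the evaluation map
`x ↦ (f ↦ f x)` takes values in the star Gel'fand spectrum of `C(X, ℂ)` and is a
bijection from `X` onto the star Gel'fand spectrum. -/
theorem eval_bijective_starGelfandSpectrum (X : Type*) [TopologicalSpace X]
    [T2Space X] [CompletelyRegularSpace X] :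
    ∃ ev : X → starGelfandSpectrumC X,
      (∀ (x : X) (f : C(X, ℂ)), (ev x : WeakDual ℂ C(X, ℂ)) f = f x) ∧
      Function.Bijective ev := by
  refine ⟨fun x => ⟨(ContinuousMap.evalCLM ℂ x : C(X, ℂ) →L[ℂ] ℂ), ?_, ?_, ?_⟩, ?_, ?_, ?_⟩
  · rfl
  · intro f g
    rfl
  · intro f
    rfl
  · intro x f
    rfl
  · intro x y hxy
    by_contra hne
    have : T35Space X := {}
    obtain ⟨f, hf, hfne⟩ := separatesPoints_continuous_of_t35Space (X := X) hne
    have key := congrArg (fun ψ : starGelfandSpectrumC X =>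
      (ψ : WeakDual ℂ C(X, ℂ)) (complexify ⟨f, hf⟩)) hxy
    have key' : (f x : ℂ) = f y := key
    exact hfne (by exact_mod_cast key')
  · rintro ⟨φ, h1, hmul, -⟩
    obtain ⟨x, hx⟩ := exists_eq_eval φ h1 hmul
    exact ⟨x, Subtype.ext (ContinuousLinearMap.ext fun f => (hx f).symm)⟩
end

section
/- States on C(X, ℂ) are compactly supported Borel probability measures: let X be a completely regular Hausdorff topological space equipped with its Borel σ-algebra, and let E : C(X, ℂ) → ℂ be a ℂ-linear functional that is continuous with respect to the compact-open topology, normalized (E(1) = 1), and positive (E(conj f · f) is a nonnegative real number for every f ∈ C(X, ℂ)). Then there exists a Borel probability measure μ on X and a compact set K ⊆ X with μ(X \ K) = 0 such that E(f) = ∫ f dμ for every f ∈ C(X, ℂ). -/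
open MeasureTheory

/-!
Continuity of `E` at `0` for the compact-open topology provides a compact `K` such that `E f = 0`
whenever `f` vanishes on `K` (`exists_compact_forall_eq_zero`), so `E f` depends only on `f|_K`.
Since `X` embeds in its Stone–Čech compactification, which is normal, the Tietze theorem extends
every real continuous function on `K` to `X` (`exists_extension_of_isCompact`). Hence the real part
of `E` descends to a positive linear functional on `C(K, ℝ)`: positivity on nonnegative functions
comes from `f = conj (√f) * √f`, and a nonnegative function on `K` has a nonnegative extension,
the absolute value of any extension. The Riesz–Markov–Kakutani theorem on `K` gives a measure, whose
image under the inclusion `K → X` is the measure sought. Finally `E` is real on real functions,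
because `4 f = (f + 1)² - (f - 1)²`, so the complex case follows by splitting into real and
imaginary parts.
-/

namespace StateIntegral

variable {X : Type*} [TopologicalSpace X]

/-- A real-valued continuous function regarded as a complex-valued one. -/
def toComplex (f : C(X, ℝ)) : C(X, ℂ) := ⟨fun x => (f x : ℂ), by fun_prop⟩

@[simp] lemma toComplex_apply (f : C(X, ℝ)) (x : X) : toComplex f x = (f x : ℂ) := rfl

/-- Some neighbourhood of `0` on which `|E| < 1` only constrains values on a compact `K`. A function
vanishing on `K` has all its multiples in this neighbourhood, which forces `E` to vanish at it. -/
lemma exists_compact_forall_eq_zero (E : C(X, ℂ) →ₗ[ℂ] ℂ) (hcont : Continuous E) :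
    ∃ K : Set X, IsCompact K ∧ ∀ f : C(X, ℂ), (∀ x ∈ K, f x = 0) → E f = 0 := by
  have hU : E ⁻¹' Metric.ball 0 1 ∈ nhds (0 : C(X, ℂ)) :=
    hcont.continuousAt.preimage_mem_nhds (by rw [map_zero]; exact Metric.ball_mem_nhds _ one_pos)
  obtain ⟨⟨K, V⟩, ⟨hK, hV⟩, hKV⟩ := (nhds_basis_uniformity'
    (ContinuousMap.hasBasis_compactConvergenceUniformity (α := X) (β := ℂ))).mem_iff.1 hU
  refine ⟨K, hK, fun f hf => ?_⟩
  by_contra hne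
  have h1 : (E f)⁻¹ • f ∈ E ⁻¹' Metric.ball 0 1 := hKV fun x hx => by
    simpa [hf x hx] using refl_mem_uniformity hV
  simp [hne] at h1

/-- Tietze extension from a compact subset of a Tychonoff space, obtained from the Tietze theorem
in the Stone–Čech compactification. -/
lemma exists_extension_of_isCompact [T35Space X] {K : Set X} (hK : IsCompact K) (f : C(K, ℝ)) :
    ∃ g : C(X, ℝ), ∀ x : K, g x = f x := by
  have : CompactSpace K := isCompact_iff_compactSpace.mp hK
  have he : Topology.IsClosedEmbedding (fun x : K => stoneCechUnit (x : X)) :=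
    (continuous_stoneCechUnit.comp continuous_subtype_val).isClosedEmbedding
      (isEmbedding_stoneCechUnit.injective.comp Subtype.val_injective)
  obtain ⟨G, hG⟩ := ContinuousMap.exists_extension' he f
  exact ⟨G.comp ⟨stoneCechUnit, continuous_stoneCechUnit⟩, fun x => congrFun hG x⟩

/-- A real function is a difference of squares, hence a positive functional takes a real value at it. -/
lemma im_apply_toComplex (E : C(X, ℂ) →ₗ[ℂ] ℂ)
    (hpos : ∀ f : C(X, ℂ), ∃ r : ℝ, 0 ≤ r ∧ E (star f * f) = (r : ℂ)) (f : C(X, ℝ)) :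
    (E (toComplex f)).im = 0 := by
  obtain ⟨r, -, hr⟩ := hpos (toComplex (f + 1))
  obtain ⟨s, -, hs⟩ := hpos (toComplex (f - 1))
  have h : (4 : ℂ) • toComplex f = star (toComplex (f + 1)) * toComplex (f + 1)
      - star (toComplex (f - 1)) * toComplex (f - 1) := by
    ext x
    simp
    ring
  have h2 := congrArg Complex.im (congrArg E h)
  rw [map_sub, hr, hs, map_smul] at h2
  simpa using h2

lemma re_apply_toComplex_nonneg (E : C(X, ℂ) →ₗ[ℂ] ℂ)
    (hpos : ∀ f : C(X, ℂ), ∃ r : ℝ, 0 ≤ r ∧ E (star f * f) = (r : ℂ)) (f : C(X, ℝ))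
    (hf : ∀ x, 0 ≤ f x) : 0 ≤ (E (toComplex f)).re := by
  obtain ⟨r, hr0, hr⟩ := hpos (toComplex ⟨fun x => √(f x), by fun_prop⟩)
  have h : toComplex f = star (toComplex ⟨fun x => √(f x), by fun_prop⟩) *
      toComplex ⟨fun x => √(f x), by fun_prop⟩ := by
    ext x
    simp [← Complex.ofReal_mul, Real.mul_self_sqrt (hf x)]
  rw [h, hr]
  simpa using hr0

/-- The measure on `K` is the Riesz measure of the functional sending a function on `K` to the value
of `Re E` at any of its extensions to `X`. -/
lemma exists_measure_on_compact [T35Space X] [MeasurableSpace X] [BorelSpace X]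
    (E : C(X, ℂ) →ₗ[ℂ] ℂ)
    (hpos : ∀ f : C(X, ℂ), ∃ r : ℝ, 0 ≤ r ∧ E (star f * f) = (r : ℂ))
    {K : Set X} (hK : IsCompact K) (hE : ∀ f : C(X, ℂ), (∀ x ∈ K, f x = 0) → E f = 0) :
    ∃ κ : Measure K, IsFiniteMeasure κ ∧
      ∀ f : C(X, ℝ), E (toComplex f) = ((∫ x, f x ∂κ : ℝ) : ℂ) := by
  have : CompactSpace K := isCompact_iff_compactSpace.mp hK
  have hcongr : ∀ f g : C(X, ℂ), (∀ x ∈ K, f x = g x) → E f = E g := fun f g h => by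
    rw [← sub_eq_zero, ← map_sub]
    exact hE _ fun x hx => by simp [h x hx]
  choose ext hext using fun f : C(K, ℝ) => exists_extension_of_isCompact hK f
  let Λ₀ : CompactlySupportedContinuousMap K ℝ →ₗ[ℝ] ℝ :=
    { toFun := fun f => (E (toComplex (ext f.toContinuousMap))).re
      map_add' := fun f g => by
        rw [← Complex.add_re, ← map_add]
        refine congrArg Complex.re (hcongr _ _ fun x hx => ?_)
        simp [hext _ ⟨x, hx⟩]
      map_smul' := fun c f => by
        have h : E (toComplex (ext (c • f).toContinuousMap)) =
            E ((c : ℂ) • toComplex (ext f.toContinuousMap)) := hcongr _ _ fun x hx => by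
          simp [hext _ ⟨x, hx⟩]
        rw [h, map_smul]
        simp }
  let Λ : CompactlySupportedContinuousMap K ℝ →ₚ[ℝ] ℝ := PositiveLinearMap.mk₀ Λ₀ fun f hf => by
    have h : E (toComplex (ext f.toContinuousMap)) = E (toComplex |ext f.toContinuousMap|) :=
      hcongr _ _ fun x hx => by
        have h0 : 0 ≤ f ⟨x, hx⟩ := hf ⟨x, hx⟩
        simp [hext _ ⟨x, hx⟩, abs_of_nonneg h0]
    change 0 ≤ (E (toComplex (ext f.toContinuousMap))).re
    rw [h]
    exact re_apply_toComplex_nonneg E hpos _ fun x => by simp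
  refine ⟨RealRMK.rieszMeasure Λ, inferInstance, fun f => ?_⟩
  let fK : CompactlySupportedContinuousMap K ℝ :=
    ⟨f.restrict K, HasCompactSupport.of_compactSpace _⟩
  have h1 : ∫ x : K, f x ∂(RealRMK.rieszMeasure Λ) = (E (toComplex (ext (f.restrict K)))).re :=
    RealRMK.integral_rieszMeasure Λ fK
  have h2 : E (toComplex (ext (f.restrict K))) = E (toComplex f) := hcongr _ _ fun x hx => by
    simp [hext _ ⟨x, hx⟩]
  rw [h1, h2]
  exact Complex.ext (by simp) (by simp [im_apply_toComplex E hpos f])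

end StateIntegral

open StateIntegral

/-- States on `C(X, ℂ)` are compactly supported Borel probability
measures: if `X` is a completely regular Hausdorff space with its Borel σ-algebra and
`E : C(X, ℂ) → ℂ` is linear, continuous for the compact-open topology, normalized
(`E 1 = 1`) and positive (`E (conj f * f)` is a nonnegative real for all `f`), then
there are a Borel probability measure `μ` on `X` and a compact `K ⊆ X` with
`μ (X \ K) = 0` such that `E f = ∫ f dμ` for every `f`. -/
theorem state_eq_integral_compactly_supported_measure (X : Type*) [TopologicalSpace X]
    [T2Space X] [CompletelyRegularSpace X] [MeasurableSpace X] [BorelSpace X]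
    (E : C(X, ℂ) →ₗ[ℂ] ℂ) (hcont : Continuous E) (hnorm : E 1 = 1)
    (hpos : ∀ f : C(X, ℂ), ∃ r : ℝ, 0 ≤ r ∧ E (star f * f) = (r : ℂ)) :
    ∃ (μ : Measure X) (K : Set X), IsProbabilityMeasure μ ∧ IsCompact K ∧
      μ (Set.univ \ K) = 0 ∧ ∀ f : C(X, ℂ), E f = ∫ x, f x ∂μ := by
  have : T35Space X := {}
  obtain ⟨K, hK, hE⟩ := exists_compact_forall_eq_zero E hcont
  have : CompactSpace K := isCompact_iff_compactSpace.mp hK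
  obtain ⟨κ, hκ, hint⟩ := exists_measure_on_compact E hpos hK hE
  have hemb : MeasurableEmbedding (Subtype.val : K → X) :=
    MeasurableEmbedding.subtype_coe hK.measurableSet
  refine ⟨κ.map Subtype.val, K, ⟨?_⟩, hK, ?_, fun f => ?_⟩
  · have h1 : toComplex (1 : C(X, ℝ)) = 1 := by ext; simp
    have h := hint 1
    rw [h1, hnorm] at h
    have h2 : κ.real Set.univ = 1 := by
      have := congrArg Complex.re h
      simpa using this.symm
    rw [hemb.map_apply, Set.preimage_univ]
    simpa [Measure.real, ENNReal.toReal_eq_one_iff] using h2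
  · rw [hemb.map_apply]
    simp
  · rw [hemb.integral_map]
    let u : C(X, ℝ) := ⟨fun x => (f x).re, by fun_prop⟩
    let v : C(X, ℝ) := ⟨fun x => (f x).im, by fun_prop⟩
    have hf : f = toComplex u + Complex.I • toComplex v := by
      ext x
      simp [u, v, mul_comm Complex.I, Complex.re_add_im]
    have hfi : Integrable (fun x : K => f x) κ :=
      (f.restrict K).continuous.integrable_of_hasCompactSupport
        (HasCompactSupport.of_compactSpace _)
    have hsplit := integral_re_add_im (𝕜 := ℂ) hfi
    rw [← hsplit]
    conv_lhs => rw [hf, map_add, map_smul, hint u, hint v]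
    simp [u, v, mul_comm Complex.I]
end
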